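/- arXiv:2605.20338 — 3 statements merged into one kernel-verified Lean document; each statement's English description precedes it below -/
import Mathlib

section
/- Let N = 2M be an even positive integer. Let σ_1,…,σ_N and η_1,…,η_N be complex numbers with ∑_{i=1}^N σ_i = 0, ∑_{i=1}^N η_i = 0, and σ_i − σ_j ∉ ℤ for all i ≠ j. Set Σ_i = exp(2πi·σ_i) (these are pairwise distinct), ζ_i = exp(2πi·η_i), and ρ_i = (N−2i+1)/2. Let V be the N×N Vandermonde matrix V_{ij} = Σ_i^{j−1}, T = diag(ζ_1,…,ζ_N), and E = V^{−1}TV. Then the determinant of the bottom-left M×M submatrix of E (rows N−M+1,…,N, columns 1,…,M) equals ∑_{S ⊆ {1,…,N}, |S| = M} exp(iπ ∑_{i∈S}(2η_i − ρ_i)) · ∏ (2 sin(π(σ_i − σ_j)))^{−1}, where the product runs over all pairs 1 ≤ i < j ≤ N such that exactly one of i, j belongs to S. -/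
open Finset Matrix

/-!
Write `N = m + M`. Since `V * E = T * V`, Cramer's rule for the last `M` columns shows that `det V`
times the bottom-left minor of `E` is the determinant of the matrix whose columns are the first `m`
columns of `V` followed by the first `M` columns of `T * V`. Laplace expansion along these two
blocks, in which every summand is a product of two smaller Vandermonde determinants, gives
`∑_S ∏_{i ∈ S} ζ i / ∏_{i ∉ S, j ∈ S} (Σ j - Σ i)` for the minor.

Each difference `Σ j - Σ i` is `2 sin (π (σ i - σ j))` up to the phase `-I * exp (iπ (σ i + σ j))`.
Over `i ∉ S`, `j ∈ S`, the powers of `I` left after ordering each pair multiply to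
`exp (-iπ ∑_{i ∈ S} ρ i)`, and for `N = 2 * M` the remaining phase only involves `∑ i, σ i = 0`.
-/

section SumEquiv

variable {R ι p q : Type*} [Fintype q] {S : Finset ι}

theorem exists_sumEquiv_of_card_eq [Finite ι] (f : ι ≃ p ⊕ q) (hS : #S = Fintype.card q) :
    ∃ e : p ⊕ q ≃ ι, (∀ k, e (Sum.inl k) ∉ S) ∧ ∀ k, e (Sum.inr k) ∈ S := by
  classical
  have : Fintype ι := .ofFinite ι
  have : Fintype p := .ofInjective _ (f.symm.injective.comp Sum.inl_injective)
  have hq : Fintype.card q = Fintype.card {i // i ∈ S} := by rw [Fintype.card_coe, hS]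
  have hp : Fintype.card p = Fintype.card {i // i ∉ S} := by
    rw [Fintype.card_subtype_compl, ← hq, Fintype.card_congr f, Fintype.card_sum,
      Nat.add_sub_cancel]
  let e := (Equiv.sumComm p q).trans
    (((Fintype.equivOfCardEq hq).sumCongr (Fintype.equivOfCardEq hp)).trans
      (Equiv.sumCompl (· ∈ S)))
  exact ⟨e, fun k ↦ (Fintype.equivOfCardEq hp k).2, fun k ↦ (Fintype.equivOfCardEq hq k).2⟩

theorem prod_compl_prod_eq_of_sumEquiv [Fintype ι] [DecidableEq ι] [Fintype p] [CommMonoid R]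
    (e : p ⊕ q ≃ ι) (hl : ∀ k, e (Sum.inl k) ∉ S) (hr : ∀ k, e (Sum.inr k) ∈ S) (g : ι → ι → R) :
    ∏ i ∈ Sᶜ, ∏ j ∈ S, g i j = ∏ k, ∏ l, g (e (Sum.inl k)) (e (Sum.inr l)) := by
  have hS : S = univ.map (Function.Embedding.inr.trans e.toEmbedding) := by
    ext i
    obtain ⟨k | k, rfl⟩ := e.surjective i <;> simp [hl, hr]
  have hSc : Sᶜ = univ.map (Function.Embedding.inl.trans e.toEmbedding) := by
    ext i
    obtain ⟨k | k, rfl⟩ := e.surjective i <;> simp [hl, hr]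
  rw [hSc, hS]
  simp

end SumEquiv

section Laplace

variable {R ι p q : Type*} [DecidableEq ι]

/-- The matrix whose rows in `S` carry only the right block `B`, the other rows only the left block
`A`: a summand of the Laplace expansion of `fromCols A B` along its two blocks of columns. The
equivalence `f` identifies row and column indices, so that the determinant makes sense. -/
def splitRows [Zero R] (f : ι ≃ p ⊕ q) (A : Matrix ι p R) (B : Matrix ι q R) (S : Finset ι) :
    Matrix ι ι R :=
  of fun i j ↦ Sum.elim (if i ∈ S then 0 else A i) (if i ∈ S then B i else 0) (f j)

variable [CommRing R] [Fintype ι]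

theorem det_fromCols_diagonal_mul (f : ι ≃ p ⊕ q) (A : Matrix ι p R) (B : Matrix ι q R)
    (z : ι → R) :
    ((fromCols A (diagonal z * B)).submatrix id f).det =
      ∑ S, (∏ i ∈ S, z i) * (splitRows f A B S).det := by
  let left : ι → ι → R := fun i j ↦ Sum.elim (A i) 0 (f j)
  let right : ι → ι → R := fun i j ↦ Sum.elim 0 (z i • B i) (f j)
  have hsum : (fromCols A (diagonal z * B)).submatrix id f = of (right + left) := by
    ext i j
    rcases hj : f j with k | k <;> simp [left, right, hj]
  have hsplit (S : Finset ι) : S.piecewise right left =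
      of fun i j ↦ (if i ∈ S then z i else 1) * splitRows f A B S i j := by
    ext i j
    by_cases hi : i ∈ S <;> rcases hj : f j with k | k <;>
      simp [left, right, splitRows, hi, hj]
  calc ((fromCols A (diagonal z * B)).submatrix id f).det
      = ∑ S : Finset ι, (of (S.piecewise right left)).det := by
        rw [hsum]
        exact detRowAlternating.map_add_univ right left
    _ = ∑ S, (∏ i ∈ S, z i) * (splitRows f A B S).det := by
        refine sum_congr rfl fun S _ ↦ ?_
        rw [hsplit]
        refine (det_mul_column _ (splitRows f A B S)).trans ?_
        rw [prod_ite_mem, univ_inter]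

variable [Fintype q] {S : Finset ι}

theorem det_splitRows_of_card_ne (f : ι ≃ p ⊕ q) (A : Matrix ι p R) (B : Matrix ι q R)
    (hS : #S ≠ Fintype.card q) : (splitRows f A B S).det = 0 := by
  rw [det_apply]
  refine sum_eq_zero fun τ _ ↦ ?_
  suffices ∃ j, splitRows f A B S (τ j) j = 0 by
    obtain ⟨j, hj⟩ := this
    have hprod : ∏ j, splitRows f A B S (τ j) j = 0 := prod_eq_zero (mem_univ j) hj
    exact (congrArg (Equiv.Perm.sign τ • ·) hprod).trans (smul_zero _)
  by_contra! hne
  have hmem (j : ι) : τ j ∈ S ↔ (f j).isRight := by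
    have := hne j
    rcases hj : f j with k | k <;> by_cases hτ : τ j ∈ S <;> simp_all [splitRows]
  refine hS ?_
  let g : q → ι := fun k ↦ τ (f.symm (Sum.inr k))
  have himage : S = univ.image g := by
    ext i
    obtain ⟨j, rfl⟩ := (f.symm.trans τ).surjective i
    rcases j with k | k <;> simp [g, hmem]
  rw [himage, card_image_of_injective _ fun k l h ↦ by simpa [g] using h, card_univ]

-- Cramer's rule for several columns at once.
theorem det_mul_det_submatrix_inr [DecidableEq q] (f : ι ≃ p ⊕ q)
    (V : Matrix ι ι R) (E : Matrix ι q R) :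
    V.det * (E.submatrix (f.symm ∘ Sum.inr) id).det =
      ((fromCols (V.submatrix id (f.symm ∘ Sum.inl)) (V * E)).submatrix id f).det := by
  classical
  have : Fintype p := .ofInjective _ (f.symm.injective.comp Sum.inl_injective)
  let G : Matrix (p ⊕ q) (p ⊕ q) R :=
    fromBlocks 1 (E.submatrix (f.symm ∘ Sum.inl) id) 0 (E.submatrix (f.symm ∘ Sum.inr) id)
  have hG : V.submatrix f.symm f.symm * G =
      ((fromCols (V.submatrix id (f.symm ∘ Sum.inl)) (V * E)).submatrix id f).submatrix
        f.symm f.symm := by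
    ext i (j | j)
    · simp [G, mul_apply, one_apply]
    · simp [G, mul_apply, ← Equiv.sum_comp f.symm]
  have hdet : G.det = (E.submatrix (f.symm ∘ Sum.inr) id).det := by
    rw [det_fromBlocks_zero₂₁, det_one, one_mul]
  rw [← hdet, ← det_submatrix_equiv_self f.symm V, ← det_mul, hG, det_submatrix_equiv_self]

variable [Fintype p]

theorem sign_mul_det_splitRows [DecidableEq p] [DecidableEq q] (f : ι ≃ p ⊕ q)
    (A : Matrix ι p R) (B : Matrix ι q R) (e : p ⊕ q ≃ ι)
    (hl : ∀ k, e (Sum.inl k) ∉ S) (hr : ∀ k, e (Sum.inr k) ∈ S) :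
    (Equiv.Perm.sign (f.trans e) : R) * (splitRows f A B S).det =
      (A.submatrix (e ∘ Sum.inl) id).det * (B.submatrix (e ∘ Sum.inr) id).det := by
  have hblocks : ((splitRows f A B S).submatrix (f.trans e) id).submatrix f.symm f.symm =
      fromBlocks (A.submatrix (e ∘ Sum.inl) id) 0 0 (B.submatrix (e ∘ Sum.inr) id) := by
    ext i j
    rcases i with i | i <;> rcases j with j | j <;> simp [splitRows, hl, hr]
  rw [← det_permute, ← det_submatrix_equiv_self f.symm, hblocks, det_fromBlocks_zero₂₁]

end Laplace

section Vandermonde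

variable {m n : ℕ}

theorem det_vandermonde_append {R : Type*} [CommRing R] (u : Fin m → R) (v : Fin n → R) :
    (vandermonde (Fin.append u v)).det =
      (vandermonde u).det * (vandermonde v).det * ∏ i, ∏ j, (v j - u i) := by
  have hdet (k : ℕ) (w : Fin k → R) :
      (vandermonde w).det = ∏ i, ∏ j, if i < j then w j - w i else 1 := by
    simp only [det_vandermonde, ← prod_filter, filter_lt_eq_Ioi]
  have hlt (i : Fin m) (j : Fin n) : Fin.castAdd n i < Fin.natAdd m j := by
    simp only [Fin.lt_def, Fin.val_castAdd, Fin.val_natAdd]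
    omega
  have hcast (i j : Fin m) : Fin.castAdd n i < Fin.castAdd n j ↔ i < j := Iff.rfl
  simp only [hdet, Fin.prod_univ_add, Fin.append_left, Fin.append_right, hlt, (hlt _ _).not_gt,
    if_true, if_false, prod_const_one, prod_mul_distrib, Fin.natAdd_lt_natAdd_iff, hcast]
  ring

theorem det_splitRows_rectVandermonde {R : Type*} [CommRing R] (x : Fin (m + n) → R)
    {S : Finset (Fin (m + n))} (hS : #S = n) :
    (splitRows finSumFinEquiv.symm (rectVandermonde x 1 m) (rectVandermonde x 1 n) S).det *
      ∏ i ∈ Sᶜ, ∏ j ∈ S, (x j - x i) = (vandermonde x).det := by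
  obtain ⟨e, hl, hr⟩ := exists_sumEquiv_of_card_eq finSumFinEquiv.symm
    (hS.trans (Fintype.card_fin n).symm)
  have hperm : (vandermonde x).submatrix (finSumFinEquiv.symm.trans e) id =
      vandermonde (Fin.append (x ∘ e ∘ Sum.inl) (x ∘ e ∘ Sum.inr)) := by
    ext i j
    refine Fin.addCases (fun k ↦ ?_) (fun k ↦ ?_) i <;>
      simp [-Fin.natAdd_eq_addNat, vandermonde_apply]
  have hrect {k : ℕ} (g : Fin k → Fin (m + n)) :
      (rectVandermonde x 1 k).submatrix g id = vandermonde (x ∘ g) := by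
    ext i j
    simp [rectVandermonde_apply, vandermonde_apply]
  have hsign : IsUnit (Equiv.Perm.sign (finSumFinEquiv.symm.trans e) : R) :=
    (Equiv.Perm.sign _).isUnit.map (Int.castRingHom R)
  refine hsign.mul_left_cancel ?_
  rw [← mul_assoc, sign_mul_det_splitRows _ _ _ e hl hr, ← det_permute, hperm,
    det_vandermonde_append, hrect, hrect, prod_compl_prod_eq_of_sumEquiv e hl hr]
  rfl

theorem det_bottomLeft_vandermonde_conj {K : Type*} [Field K] {x : Fin (m + n) → K}
    (hx : Function.Injective x) (z : Fin (m + n) → K) :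
    (((vandermonde x)⁻¹ * diagonal z * vandermonde x).submatrix
      (Fin.natAdd m : Fin n → Fin (m + n)) (Fin.castLE (Nat.le_add_left n m))).det =
      ∑ S ∈ powersetCard n univ, (∏ i ∈ S, z i) * (∏ i ∈ Sᶜ, ∏ j ∈ S, (x j - x i))⁻¹ := by
  set V := vandermonde x
  let f : Fin (m + n) ≃ Fin m ⊕ Fin n := finSumFinEquiv.symm
  have hV : V.det ≠ 0 := det_vandermonde_ne_zero_iff.2 hx
  have hinl : V.submatrix id (f.symm ∘ Sum.inl) = rectVandermonde x 1 m := by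
    ext i j
    simp [V, f, vandermonde_apply, rectVandermonde_apply]
  have hinr : V * (V⁻¹ * diagonal z * V).submatrix id (Fin.castLE (Nat.le_add_left n m)) =
      diagonal z * rectVandermonde x 1 n := by
    ext i j
    change (V * (V⁻¹ * diagonal z * V)) i _ = _
    rw [mul_assoc, mul_nonsing_inv_cancel_left _ _ hV.isUnit]
    simp [V, vandermonde_apply, rectVandermonde_apply]
  have hcramer := det_mul_det_submatrix_inr f V
    ((V⁻¹ * diagonal z * V).submatrix id (Fin.castLE (Nat.le_add_left n m)))
  rw [hinl, hinr, det_fromCols_diagonal_mul] at hcramer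
  refine mul_left_cancel₀ hV (hcramer.trans ?_)
  rw [mul_sum, ← sum_subset (subset_univ (powersetCard n univ))]
  · refine sum_congr rfl fun S hS ↦ ?_
    have hne : ∏ i ∈ Sᶜ, ∏ j ∈ S, (x j - x i) ≠ 0 :=
      prod_ne_zero_iff.2 fun i hi ↦ prod_ne_zero_iff.2 fun j hj ↦
        sub_ne_zero.2 fun h ↦ mem_compl.1 hi (hx h ▸ hj)
    rw [← det_splitRows_rectVandermonde x (mem_powersetCard_univ.1 hS), mul_left_comm,
      mul_inv_cancel_right₀ hne]
  · intro S _ hS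
    rw [det_splitRows_of_card_ne, mul_zero]
    simpa using hS

end Vandermonde

section Phases

theorem prod_compl_prod_min_max {ι R : Type*} [Fintype ι] [LinearOrder ι] [CommMonoid R]
    (S : Finset ι) (g : ι → ι → R) :
    ∏ i ∈ Sᶜ, ∏ j ∈ S, g (min i j) (max i j) =
      ∏ r ∈ (univ ×ˢ univ).filter (fun r : ι × ι ↦ r.1 < r.2 ∧ ¬(r.1 ∈ S ↔ r.2 ∈ S)),
        g r.1 r.2 := by
  rw [← prod_product']
  refine prod_bij' (fun r _ ↦ (min r.1 r.2, max r.1 r.2))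
    (fun r _ ↦ if r.2 ∈ S then r else r.swap) ?_ ?_ ?_ ?_ ?_
  · rintro ⟨i, j⟩ h
    obtain ⟨hi, hj⟩ : i ∉ S ∧ j ∈ S := by simpa using h
    rcases lt_or_gt_of_ne (show i ≠ j by rintro rfl; exact hi hj) with hij | hij <;>
      simp [hij, hij.le, hi, hj]
  · rintro ⟨i, j⟩ h
    by_cases hj : j ∈ S <;> simp_all
  · rintro ⟨i, j⟩ h
    obtain ⟨hi, hj⟩ : i ∉ S ∧ j ∈ S := by simpa using h
    rcases le_total i j with hij | hij <;> simp [hij, hi, hj]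
  · rintro ⟨i, j⟩ h
    have hij : i < j := by simp_all
    by_cases hj : j ∈ S <;> simp [hj, hij.le]
  · simp

theorem sum_compl_sum_lt_sub_gt {N : ℕ} {R : Type*} [CommRing R] (S : Finset (Fin N)) :
    ∑ i ∈ Sᶜ, ∑ j ∈ S, ((if i < j then 1 else 0) - (if j < i then 1 else 0) : R) =
      ∑ j ∈ S, (2 * (j : ℕ) + 1 - N : R) := by
  have hself : ∑ i ∈ S, ∑ j ∈ S, ((if i < j then 1 else 0) - (if j < i then 1 else 0) : R) = 0 := by
    simp only [sum_sub_distrib]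
    rw [sum_comm, sub_self]
  have hrow (j : Fin N) :
      ∑ i, ((if i < j then 1 else 0) - (if j < i then 1 else 0) : R) = 2 * (j : ℕ) + 1 - N := by
    have hj : (j : ℕ) + (N - 1 - j) + 1 = N := by omega
    simp only [sum_sub_distrib, sum_boole, filter_gt_eq_Iio, filter_lt_eq_Ioi, Fin.card_Iio,
      Fin.card_Ioi]
    rw [← congrArg (Nat.cast (R := R)) hj]
    push_cast
    ring
  calc _ = ∑ i, ∑ j ∈ S, ((if i < j then 1 else 0) - (if j < i then 1 else 0) : R) := by
        rw [← sum_add_sum_compl S, hself, zero_add]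
    _ = _ := by
        rw [sum_comm]
        exact sum_congr rfl fun j _ ↦ hrow j

theorem sum_compl_sum_add {ι R : Type*} [Fintype ι] [DecidableEq ι] [CommRing R] (S : Finset ι)
    (a : ι → R) :
    ∑ i ∈ Sᶜ, ∑ j ∈ S, (a i + a j) =
      #S * ∑ i, a i + (Fintype.card ι - 2 * #S) * ∑ i ∈ S, a i := by
  rw [← sum_add_sum_compl S a, ← card_add_card_compl S]
  simp only [sum_add_distrib, sum_const, nsmul_eq_mul, ← mul_sum]
  push_cast
  ring

open Complex

theorem exp_sub_exp_eq_mul_two_sin (a b : ℂ) :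
    exp (2 * Real.pi * I * b) - exp (2 * Real.pi * I * a) =
      exp (Real.pi * I * (a + b)) * -I * (2 * sin (Real.pi * (a - b))) := by
  have hb : exp (2 * Real.pi * I * b) =
      exp (Real.pi * I * (a + b)) * exp (-(Real.pi * (a - b)) * I) := by
    rw [← exp_add]; ring_nf
  have ha : exp (2 * Real.pi * I * a) =
      exp (Real.pi * I * (a + b)) * exp (Real.pi * (a - b) * I) := by
    rw [← exp_add]; ring_nf
  rw [ha, hb, sin]
  linear_combination (exp (Real.pi * I * (a + b)) *
    (exp (-(Real.pi * (a - b)) * I) - exp (Real.pi * (a - b) * I))) * I_sq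

theorem inv_exp_sub_exp {ι : Type*} [LinearOrder ι] (σ : ι → ℂ) (i j : ι) :
    (exp (2 * Real.pi * I * σ j) - exp (2 * Real.pi * I * σ i))⁻¹ =
      exp (-(Real.pi * I) * (σ i + σ j)) *
        exp (Real.pi / 2 * I * ((if i < j then 1 else 0) - (if j < i then 1 else 0))) *
        (2 * sin (Real.pi * (σ (min i j) - σ (max i j))))⁻¹ := by
  rcases lt_trichotomy i j with h | rfl | h
  · rw [exp_sub_exp_eq_mul_two_sin, mul_inv, mul_inv, ← Complex.exp_neg]
    simp [h, h.le, h.not_gt, exp_pi_div_two_mul_I]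
  · simp -- both sides are `0⁻¹ = 0`
  · rw [← neg_sub, exp_sub_exp_eq_mul_two_sin, inv_neg, mul_inv, mul_inv, ← Complex.exp_neg,
      add_comm (σ j)]
    simp [h, h.le, h.not_gt, Complex.exp_neg, exp_pi_div_two_mul_I]

theorem inv_prod_compl_prod_exp_sub_exp {N : ℕ} (σ : Fin N → ℂ) (S : Finset (Fin N)) :
    (∏ i ∈ Sᶜ, ∏ j ∈ S, (exp (2 * Real.pi * I * σ j) - exp (2 * Real.pi * I * σ i)))⁻¹ =
      exp (-(Real.pi * I * #S * ∑ i, σ i)) *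
        exp (-(Real.pi * I) * ∑ i ∈ S, ((N - 2 * (i : ℕ) - 1) / 2 + (N - 2 * #S) * σ i)) *
        ∏ r ∈ (univ ×ˢ univ).filter (fun r : Fin N × Fin N ↦ r.1 < r.2 ∧ ¬(r.1 ∈ S ↔ r.2 ∈ S)),
          (2 * sin (Real.pi * (σ r.1 - σ r.2)))⁻¹ := by
  rw [← prod_compl_prod_min_max S fun i j ↦ (2 * sin (Real.pi * (σ i - σ j)))⁻¹]
  simp only [← prod_inv_distrib, inv_exp_sub_exp, prod_mul_distrib, ← exp_sum]
  simp only [← mul_sum]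
  rw [sum_compl_sum_lt_sub_gt, sum_compl_sum_add, ← exp_add, ← exp_add, Fintype.card_fin]
  congr 2
  simp only [sum_add_distrib, ← mul_sum, ← sum_div, sum_sub_distrib]
  ring

theorem injective_exp_two_pi_mul_I {ι : Type*} {σ : ι → ℂ}
    (hσ : ∀ i j, i ≠ j → ∀ n : ℤ, σ i - σ j ≠ n) :
    Function.Injective fun i ↦ exp (2 * Real.pi * I * σ i) := by
  intro i j hij
  by_contra hne
  obtain ⟨n, hn⟩ := exp_eq_exp_iff_exists_int.1 hij
  refine hσ i j hne n (mul_left_cancel₀ two_pi_I_ne_zero ?_)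
  linear_combination hn

end Phases

theorem bottomLeft_minor_even_quantization_general
    (N M : ℕ) (hMN : M ≤ N) (σ η : Fin N → ℂ)
    (hnonint : ∀ i j : Fin N, i ≠ j → ∀ n : ℤ, σ i - σ j ≠ (n : ℂ))
    (Sg ζ : Fin N → ℂ)
    (hSg : ∀ i, Sg i = Complex.exp (2 * Real.pi * Complex.I * σ i))
    (hζ : ∀ i, ζ i = Complex.exp (2 * Real.pi * Complex.I * η i)) :
    (((vandermonde Sg)⁻¹ * diagonal ζ * vandermonde Sg).submatrix
        (fun i : Fin M ↦ (⟨N - M + i.val, by omega⟩ : Fin N)) (Fin.castLE hMN)).det =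
      Complex.exp (-(Real.pi * Complex.I * M * ∑ i, σ i)) *
        ∑ S ∈ powersetCard M (univ : Finset (Fin N)),
          Complex.exp (Real.pi * Complex.I *
              ∑ i ∈ S, (2 * η i - ((N : ℂ) - 2 * ((i : ℕ) : ℂ) - 1) / 2 - (N - 2 * M) * σ i)) *
            ∏ p ∈ (univ ×ˢ univ).filter
                (fun p : Fin N × Fin N ↦ p.1 < p.2 ∧ ¬((p.1 ∈ S) ↔ (p.2 ∈ S))),
              (2 * Complex.sin ((Real.pi : ℂ) * (σ p.1 - σ p.2)))⁻¹ := by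
  obtain rfl : Sg = fun i ↦ Complex.exp (2 * Real.pi * Complex.I * σ i) := funext hSg
  obtain ⟨m, rfl⟩ := Nat.exists_eq_add_of_le' hMN
  have hrows : (fun i : Fin M ↦ (⟨m + M - M + i.val, by omega⟩ : Fin (m + M))) = Fin.natAdd m :=
    funext fun i ↦ Fin.ext (by simp)
  rw [hrows, det_bottomLeft_vandermonde_conj (injective_exp_two_pi_mul_I hnonint), mul_sum]
  refine sum_congr rfl fun S hS ↦ ?_
  simp only [hζ, ← Complex.exp_sum, inv_prod_compl_prod_exp_sub_exp, ← mul_assoc,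
    ← Complex.exp_add, mem_powersetCard_univ.1 hS]
  congr 2
  simp only [sum_add_distrib, sum_sub_distrib, ← mul_sum]
  ring

/-- N even: the determinant of the bottom-left M×M submatrix of
E = V⁻¹ T V equals
∑_{S ⊆ {1,…,N}, |S| = M} exp(iπ ∑_{i∈S}(2ηᵢ − ρᵢ)) ∏ (2 sin(π(σᵢ − σⱼ)))⁻¹,
the product over pairs i < j with exactly one of i, j in S. -/
theorem bottomLeft_minor_even_quantization
    (N M : ℕ) (hM : 1 ≤ M) (hNM : N = 2 * M)
    (σ η : Fin N → ℂ)
    (hσ0 : ∑ i, σ i = 0) (hη0 : ∑ i, η i = 0)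
    (hnonint : ∀ i j : Fin N, i ≠ j → ∀ n : ℤ, σ i - σ j ≠ (n : ℂ))
    (Sg ζ : Fin N → ℂ)
    (hSg : ∀ i, Sg i = Complex.exp (2 * Real.pi * Complex.I * σ i))
    (hζ : ∀ i, ζ i = Complex.exp (2 * Real.pi * Complex.I * η i)) :
    ((((Matrix.vandermonde Sg)⁻¹ * Matrix.diagonal ζ * Matrix.vandermonde Sg).submatrix
        (fun i : Fin M => (⟨N - M + i.val, by have := i.isLt; omega⟩ : Fin N))
        (Fin.castLE (by omega : M ≤ N))).det)
      =
    ∑ S ∈ Finset.powersetCard M (Finset.univ : Finset (Fin N)),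
      Complex.exp (Real.pi * Complex.I *
          ∑ i ∈ S, (2 * η i - ((N : ℂ) - 2 * ((i : ℕ) : ℂ) - 1) / 2)) *
        ∏ p ∈ (Finset.univ ×ˢ Finset.univ).filter
            (fun p : Fin N × Fin N => p.1 < p.2 ∧ ¬((p.1 ∈ S) ↔ (p.2 ∈ S))),
          (2 * Complex.sin ((Real.pi : ℂ) * (σ p.1 - σ p.2)))⁻¹ := by
  subst hNM
  simpa [hσ0] using
    bottomLeft_minor_even_quantization_general (2 * M) M (by omega) σ η hnonint Sg ζ hSg hζ
end

section
/- Let N ≥ 1 and 1 ≤ M ≤ N be integers and let Σ_1,…,Σ_N ∈ ℂ be pairwise distinct. Let V be the N×N Vandermonde matrix V_{ij} = Σ_i^{j−1}, and set M₂ = {N−M+1,…,N}. For any S ⊆ {1,…,N} with |S| = M, the determinant of the submatrix (V^{−1})_{M₂,S} (rows in M₂, columns in S, in increasing order) equals (−1)^{∑_{i∈S} i + ∑_{i∈M₂} i} · (∏_{i,j∈S^c, i>j} (Σ_i − Σ_j)) / (∏_{1 ≤ j < i ≤ N} (Σ_i − Σ_j)), where S^c = {1,…,N}∖S. -/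
open Finset Matrix

/-!
Order rows and columns of an invertible matrix so that chosen index sets come first. The top left
block of the inverse then completes to a block triangular matrix whose product with the matrix is
again block triangular, and taking determinants gives Jacobi's identity: up to the signs of the two
reorderings, `det A` times a minor of `A⁻¹` is the complementary minor of `A`. The reordering that
lists `s` increasingly and then `sᶜ` increasingly has as inversions, for the `i`-th element `x` of
`s`, the `x - i` elements of `sᶜ` below `x` (everything counted from `0`). For a Vandermonde matrix
and the last rows of its inverse, the complementary minor lives in the first columns, so it is again
a Vandermonde determinant.
-/

lemma castAdd_lt_natAdd {m n : ℕ} (i : Fin m) (j : Fin n) : Fin.castAdd n i < Fin.natAdd m j :=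
  Fin.lt_def.2 (i.isLt.trans_le (Nat.le_add_right m j))

section Shuffle

variable {m n : ℕ} {σ : Equiv.Perm (Fin (m + n))}

lemma sign_eq_prod_inversions_of_strictMono (hl : StrictMono fun i : Fin m => σ (Fin.castAdd n i))
    (hr : StrictMono fun j : Fin n => σ (Fin.natAdd m j)) :
    σ.sign = ∏ i : Fin m, ∏ j : Fin n,
      if σ (Fin.natAdd m j) < σ (Fin.castAdd n i) then -1 else 1 := by
  have prod_Ioi_castAdd (i : Fin m) :
      (∏ k ∈ Ioi (Fin.castAdd n i), if σ (Fin.castAdd n i) < σ k then (1 : ℤˣ) else -1) =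
        ∏ j : Fin n, if σ (Fin.natAdd m j) < σ (Fin.castAdd n i) then -1 else 1 := by
    rw [← filter_lt_eq_Ioi, prod_filter, Fin.prod_univ_add]
    have left_eq_one (k : Fin m) :
        (if Fin.castAdd n i < Fin.castAdd n k then
          if σ (Fin.castAdd n i) < σ (Fin.castAdd n k) then (1 : ℤˣ) else -1 else 1) = 1 := by
      simp only [hl.lt_iff_lt, (Fin.strictMono_castAdd n).lt_iff_lt]
      split_ifs <;> rfl
    simp only [left_eq_one, castAdd_lt_natAdd, prod_const_one, one_mul, if_true]
    refine prod_congr rfl fun j _ => ?_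
    have ne : σ (Fin.natAdd m j) ≠ σ (Fin.castAdd n i) :=
      σ.injective.ne (castAdd_lt_natAdd i j).ne'
    grind
  have prod_Ioi_natAdd (j : Fin n) :
      (∏ k ∈ Ioi (Fin.natAdd m j), if σ (Fin.natAdd m j) < σ k then (1 : ℤˣ) else -1) = 1 := by
    refine prod_eq_one fun k hk => if_pos ?_
    induction k using Fin.addCases with
    | left i => exact absurd (mem_Ioi.1 hk) (castAdd_lt_natAdd i j).not_gt
    | right k => exact hr ((Fin.strictMono_natAdd m).lt_iff_lt.1 (mem_Ioi.1 hk))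
  simp only [Equiv.Perm.sign_eq_prod_prod_Ioi, Fin.prod_univ_add, prod_Ioi_castAdd,
    prod_Ioi_natAdd, prod_const_one, mul_one]

lemma val_apply_castAdd_eq_add_card_inversions
    (hl : StrictMono fun i : Fin m => σ (Fin.castAdd n i)) (i : Fin m) :
    (σ (Fin.castAdd n i) : ℕ) =
      i + #{j : Fin n | σ (Fin.natAdd m j) < σ (Fin.castAdd n i)} :=
  calc (σ (Fin.castAdd n i) : ℕ)
    _ = #{k | σ k < σ (Fin.castAdd n i)} := by
      rw [← Fin.card_Iio]
      exact (card_equiv σ (by simp)).symm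
    _ = #{k : Fin m | k < i} + #{j : Fin n | σ (Fin.natAdd m j) < σ (Fin.castAdd n i)} := by
      simp only [card_filter, Fin.sum_univ_add, hl.lt_iff_lt]
    _ = i + #{j : Fin n | σ (Fin.natAdd m j) < σ (Fin.castAdd n i)} := by
      rw [filter_gt_eq_Iio, Fin.card_Iio]

lemma sign_eq_neg_one_pow_of_strictMono (hl : StrictMono fun i : Fin m => σ (Fin.castAdd n i))
    (hr : StrictMono fun j : Fin n => σ (Fin.natAdd m j)) :
    σ.sign = (-1) ^ (∑ i : Fin m, (i : ℕ) + ∑ i : Fin m, (σ (Fin.castAdd n i) : ℕ)) := by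
  simp only [val_apply_castAdd_eq_add_card_inversions hl, sum_add_distrib, ← add_assoc]
  rw [pow_add, Even.neg_one_pow ⟨_, rfl⟩, one_mul, sign_eq_prod_inversions_of_strictMono hl hr,
    ← prod_pow_eq_pow_sum]
  simp [prod_ite]

end Shuffle

section OrderEmbOfFin

@[to_additive]
lemma prod_univ_orderEmbOfFin {α M : Type*} [LinearOrder α] [CommMonoid M] (s : Finset α) {k : ℕ}
    (hs : #s = k) (f : α → M) : ∏ i, f (s.orderEmbOfFin hs i) = ∏ x ∈ s, f x := by
  conv_rhs => rw [← map_orderEmbOfFin_univ s hs, prod_map]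
  rfl

variable {m n N : ℕ}

lemma sign_finSumFinEquiv_symm_trans_finSumEquivOfFinset {s : Finset (Fin (m + n))}
    (hs : #s = m) (hs' : #sᶜ = n) :
    Equiv.Perm.sign (finSumFinEquiv.symm.trans (finSumEquivOfFinset hs hs')) =
      (-1) ^ (∑ i : Fin m, (i : ℕ) + ∑ x ∈ s, (x : ℕ)) := by
  rw [sign_eq_neg_one_pow_of_strictMono]
  · simp [sum_univ_orderEmbOfFin s hs fun x => (x : ℕ)]
  · simpa using (s.orderEmbOfFin hs).strictMono
  · simpa using (sᶜ.orderEmbOfFin hs').strictMono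

lemma sign_finSumEquivOfFinset_symm_trans {s t : Finset (Fin N)} (hs : #s = m) (hs' : #sᶜ = n)
    (ht : #t = m) (ht' : #tᶜ = n) :
    Equiv.Perm.sign ((finSumEquivOfFinset hs hs').symm.trans (finSumEquivOfFinset ht ht')) =
      (-1) ^ (∑ x ∈ s, (x : ℕ) + ∑ x ∈ t, (x : ℕ)) := by
  obtain rfl : N = m + n := by rw [← hs, ← hs', card_add_card_compl, Fintype.card_fin]
  set e := finSumEquivOfFinset hs hs'
  set f := finSumEquivOfFinset ht ht'
  have factor : e.symm.trans f =
      (finSumFinEquiv.symm.trans e).symm.trans (finSumFinEquiv.symm.trans f) := by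
    ext; simp
  rw [factor, Equiv.Perm.sign_trans, Equiv.Perm.sign_symm,
    sign_finSumFinEquiv_symm_trans_finSumEquivOfFinset,
    sign_finSumFinEquiv_symm_trans_finSumEquivOfFinset, ← pow_add]
  exact neg_one_pow_congr (by grind)

end OrderEmbOfFin

section Jacobi

variable {R : Type*} [CommRing R]

lemma det_mul_det_toBlocks₁₁_of_mul_eq_one {m n : Type*} [Fintype m] [Fintype n] [DecidableEq m]
    [DecidableEq n] {A B : Matrix (m ⊕ n) (m ⊕ n) R} (h : A * B = 1) :
    A.det * B.toBlocks₁₁.det = A.toBlocks₂₂.det := by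
  have blocks : A.toBlocks₁₁ * B.toBlocks₁₁ + A.toBlocks₁₂ * B.toBlocks₂₁ = 1 ∧
      A.toBlocks₂₁ * B.toBlocks₁₁ + A.toBlocks₂₂ * B.toBlocks₂₁ = 0 := by
    rw [← fromBlocks_toBlocks A, ← fromBlocks_toBlocks B, fromBlocks_multiply, ← fromBlocks_one,
      fromBlocks_inj] at h
    exact ⟨h.1, h.2.2.1⟩
  have triangular : A * fromBlocks B.toBlocks₁₁ 0 B.toBlocks₂₁ 1 =
      fromBlocks 1 A.toBlocks₁₂ 0 A.toBlocks₂₂ := by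
    conv_lhs => rw [← fromBlocks_toBlocks A, fromBlocks_multiply, blocks.1, blocks.2]
    simp
  simpa using congrArg det triangular

/-- **Jacobi's complementary minor identity**. -/
theorem det_mul_det_submatrix_orderEmbOfFin_of_mul_eq_one {N m n : ℕ}
    {A B : Matrix (Fin N) (Fin N) R} (h : A * B = 1) {s t : Finset (Fin N)}
    (hs : #s = m) (hs' : #sᶜ = n) (ht : #t = m) (ht' : #tᶜ = n) :
    A.det * (B.submatrix (s.orderEmbOfFin hs) (t.orderEmbOfFin ht)).det =
      (-1) ^ (∑ x ∈ s, (x : ℕ) + ∑ x ∈ t, (x : ℕ)) *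
        (A.submatrix (tᶜ.orderEmbOfFin ht') (sᶜ.orderEmbOfFin hs')).det := by
  set e := finSumEquivOfFinset hs hs'
  set f := finSumEquivOfFinset ht ht'
  have reindexed : A.submatrix f e * B.submatrix e f = 1 := by
    rw [submatrix_mul_equiv, h, submatrix_one_equiv]
  have det_reindexed : (A.submatrix f e).det =
      (-1) ^ (∑ x ∈ s, (x : ℕ) + ∑ x ∈ t, (x : ℕ)) * A.det := by
    have det_reindex_eq := det_reindex f.symm e.symm A
    rwa [Equiv.symm_symm, sign_finSumEquivOfFinset_symm_trans, Units.val_pow_eq_pow_val,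
      Units.coe_neg_one, Int.cast_pow, Int.cast_neg, Int.cast_one] at det_reindex_eq
  have jacobi : (A.submatrix f e).det *
      (B.submatrix (s.orderEmbOfFin hs) (t.orderEmbOfFin ht)).det =
        (A.submatrix (tᶜ.orderEmbOfFin ht') (sᶜ.orderEmbOfFin hs')).det :=
    det_mul_det_toBlocks₁₁_of_mul_eq_one reindexed
  rw [← jacobi, det_reindexed, ← mul_assoc, ← mul_assoc, ← pow_add, Even.neg_one_pow ⟨_, rfl⟩,
    one_mul]

end Jacobi

section Vandermonde

variable {R : Type*} [CommRing R]

lemma prod_filter_lt_sub_eq_det_vandermonde {α : Type*} [LinearOrder α] (s : Finset α) {k : ℕ}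
    (hs : #s = k) (v : α → R) :
    ∏ p ∈ s ×ˢ s with p.2 < p.1, (v p.1 - v p.2) =
      (vandermonde (v ∘ s.orderEmbOfFin hs)).det := by
  rw [prod_filter, prod_product_right, det_vandermonde]
  simp only [← prod_univ_orderEmbOfFin s hs, OrderEmbedding.lt_iff_lt, ← prod_filter,
    filter_lt_eq_Ioi, Function.comp_apply]

lemma prod_filter_univ_lt_sub_eq_det_vandermonde {N : ℕ} (v : Fin N → R) :
    ∏ p ∈ (univ ×ˢ univ : Finset (Fin N × Fin N)) with p.2 < p.1, (v p.1 - v p.2) =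
      (vandermonde v).det := by
  rw [prod_filter_lt_sub_eq_det_vandermonde univ (card_fin N),
    ← orderEmbOfFin_unique (card_fin N) (fun _ => mem_univ _) strictMono_id, Function.comp_id]

theorem det_vandermonde_mul_det_submatrix_natAdd_of_mul_eq_one {n m : ℕ} {v : Fin (n + m) → R}
    {W : Matrix (Fin (n + m)) (Fin (n + m)) R} (hW : vandermonde v * W = 1)
    {s : Finset (Fin (n + m))} (hs : #s = m) :
    (vandermonde v).det * (W.submatrix (Fin.natAdd n) (s.orderEmbOfFin hs)).det =
      (-1) ^ (∑ i : Fin m, (n + (i : ℕ)) + ∑ x ∈ s, (x : ℕ)) *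
        ∏ p ∈ sᶜ ×ˢ sᶜ with p.2 < p.1, (v p.1 - v p.2) := by
  have hs' : #sᶜ = n := by rw [card_compl, hs, Fintype.card_fin, Nat.add_sub_cancel]
  set lastRows : Finset (Fin (n + m)) := univ.map (Fin.natAddEmb n)
  have card_lastRows : #lastRows = m := by simp [lastRows]
  have card_compl_lastRows : #lastRowsᶜ = n := by simp [card_compl, card_lastRows]
  have natAdd_eq : Fin.natAdd n = lastRows.orderEmbOfFin card_lastRows :=
    orderEmbOfFin_unique _ (by simp [lastRows]) (Fin.strictMono_natAdd n)
  have castAdd_eq : Fin.castAdd m = lastRowsᶜ.orderEmbOfFin card_compl_lastRows := by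
    refine orderEmbOfFin_unique _ (fun i => mem_compl.2 fun hi => ?_) (Fin.strictMono_castAdd m)
    obtain ⟨j, -, hj⟩ := mem_map.1 hi
    exact (castAdd_lt_natAdd i j).ne' hj
  rw [natAdd_eq, det_mul_det_submatrix_orderEmbOfFin_of_mul_eq_one hW card_lastRows
    card_compl_lastRows hs hs', ← castAdd_eq, prod_filter_lt_sub_eq_det_vandermonde sᶜ hs']
  simp [lastRows, submatrix, vandermonde]

end Vandermonde

lemma neg_one_pow_sum_add_one_add_sum_Icc {R : Type*} [Monoid R] [HasDistribNeg R] {m N : ℕ}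
    (n : ℕ) {s : Finset (Fin N)} (hs : #s = m) :
    (-1 : R) ^ ((∑ x ∈ s, ((x : ℕ) + 1)) + ∑ i ∈ Icc (n + 1) (n + m), i) =
      (-1) ^ (∑ i : Fin m, (n + (i : ℕ)) + ∑ x ∈ s, (x : ℕ)) := by
  have sum_Icc : ∑ i ∈ Icc (n + 1) (n + m), i = ∑ i : Fin m, (n + (i : ℕ)) + m := by
    rw [← Ico_add_one_right_eq_Icc, sum_Ico_eq_sum_range,
      Fin.sum_univ_eq_sum_range (fun i => n + i), show n + m + 1 - (n + 1) = m by omega]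
    simp only [add_right_comm n 1, sum_add_distrib, sum_const, card_range, smul_eq_mul, mul_one]
  have sum_add_one : ∑ x ∈ s, ((x : ℕ) + 1) = ∑ x ∈ s, (x : ℕ) + m := by
    simp [sum_add_distrib, hs]
  rw [sum_Icc, sum_add_one]
  exact neg_one_pow_congr (by grind)

theorem det_Vinv_submatrix_general {F : Type*} [Field F] {N M : ℕ} (hMN : M ≤ N) {v : Fin N → F}
    (hv : Function.Injective v) {S : Finset (Fin N)} (hS : #S = M) :
    ((vandermonde v)⁻¹.submatrix (fun i : Fin M => (⟨N - M + i, by omega⟩ : Fin N))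
        (S.orderEmbOfFin hS)).det =
      (-1) ^ ((∑ i ∈ S, ((i : ℕ) + 1)) + ∑ i ∈ Icc (N - M + 1) N, i) *
        (∏ p ∈ Sᶜ ×ˢ Sᶜ with p.2 < p.1, (v p.1 - v p.2)) /
        ∏ p ∈ (univ ×ˢ univ : Finset (Fin N × Fin N)) with p.2 < p.1, (v p.1 - v p.2) := by
  obtain ⟨n, rfl⟩ := Nat.exists_eq_add_of_le' hMN
  have det_ne_zero : (vandermonde v).det ≠ 0 := det_vandermonde_ne_zero_iff.2 hv
  have minor_eq := det_vandermonde_mul_det_submatrix_natAdd_of_mul_eq_one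
    (mul_nonsing_inv _ (isUnit_iff_ne_zero.2 det_ne_zero)) hS
  simp only [Nat.add_sub_cancel]
  rw [prod_filter_univ_lt_sub_eq_det_vandermonde, eq_div_iff det_ne_zero,
    neg_one_pow_sum_add_one_add_sum_Icc n hS, ← minor_eq, mul_comm]
  rfl

/-- for S ⊆ {1,…,N} with |S| = M and M₂ = {N−M+1,…,N},
det((V⁻¹)_{M₂,S}) = (−1)^{∑_{i∈S} i + ∑_{i∈M₂} i}
  (∏_{i,j∈Sᶜ, i>j} (Σᵢ − Σⱼ)) / (∏_{1≤j<i≤N} (Σᵢ − Σⱼ)). -/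
theorem det_Vinv_submatrix
    (N M : ℕ) (hN : 1 ≤ N) (hM1 : 1 ≤ M) (hMN : M ≤ N)
    (Sg : Fin N → ℂ) (hSg : Function.Injective Sg)
    (S : Finset (Fin N)) (hS : S.card = M) :
    (((Matrix.vandermonde Sg)⁻¹.submatrix
        (fun i : Fin M => (⟨N - M + i.val, by have := i.isLt; omega⟩ : Fin N))
        (fun j : Fin M => (S.orderIsoOfFin hS j : Fin N))).det)
      =
    (-1 : ℂ) ^ ((∑ i ∈ S, ((i : ℕ) + 1)) + ∑ i ∈ Finset.Icc (N - M + 1) N, i) *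
      (∏ p ∈ (Sᶜ ×ˢ Sᶜ).filter (fun p : Fin N × Fin N => p.2 < p.1), (Sg p.1 - Sg p.2)) /
      (∏ p ∈ (Finset.univ ×ˢ Finset.univ).filter
          (fun p : Fin N × Fin N => p.2 < p.1), (Sg p.1 - Sg p.2)) := by
  exact det_Vinv_submatrix_general hMN hSg hS
end

section
/- Let N ≥ 2 be an integer, ℏ > 0 and Λ > 0 real numbers, and u_2,…,u_N ∈ ℂ. Let 0 < δ ≤ π and let φ : ℂ → ℂ be holomorphic on the open strip {x ∈ ℂ : |Im x| < δ} and satisfy there the oper equation (−iℏ)^N φ^{(N)}(x) + ∑_{k=2}^{N−2} (−1)^k u_k (−iℏ)^{N−k} φ^{(N−k)}(x) + (Λ^N e^{−x} + Λ^N e^{x} + (−1)^N u_N) φ(x) = 0 (empty sum for N < 4). Assume there exist constants a, b, C > 0 such that |φ(x)| ≤ C·exp(−a·e^{b|Re x|}) for all x with |Im x| ≤ δ/2. Then for every y ∈ ℂ the integral ψ(y) = (2πℏ)^{−1/2} ∫_ℝ e^{−ixy/ℏ} φ(x) dx converges absolutely, and ψ satisfies the difference equation Λ^N (ψ(y+iℏ)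 + ψ(y−iℏ)) + V_N(y) ψ(y) = (−1)^{N+1} u_N ψ(y) for all y ∈ ℂ, where V_N(y) = y^N + ∑_{k=2}^{N−2} (−1)^k u_k y^{N−k}. -/
open Finset MeasureTheory

/-! The operator `-iℏ d/dx` acts on the Fourier side as multiplication by `y`, and multiplication
by `e^{±x}` acts as the shift `y ↦ y ± iℏ`, so the transform of the oper equation is the Baxter
equation. Super-exponential decay makes the transform entire in `y`; Cauchy's estimate on discs
inside the strip passes the decay on to all derivatives, so no boundary terms appear when
integrating by parts. -/

section Baxter

open Complex Polynomial

variable {F : Type*} [NormedAddCommGroup F]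

/-- Decay on `S`, as `|Re z| → ∞`, faster than every exponential `e^{-c|Re z|}`: the class of
functions whose Fourier integral converges at every complex frequency. -/
def SuperexpDecayOn (φ : ℂ → F) (S : Set ℂ) : Prop :=
  ∀ c : ℝ, ∃ K : ℝ, ∀ z ∈ S, ‖φ z‖ ≤ K * Real.exp (-c * |z.re|)

lemma neg_mul_exp_mul_le {a b s : ℝ} (ha : 0 < a) (hb : 0 < b) (hs : 0 ≤ s) (c : ℝ) :
    -a * Real.exp (b * s) ≤ c ^ 2 / (2 * a * b ^ 2) - c * s := by
  have hexp : (b * s) ^ 2 / 2 ≤ Real.exp (b * s) := by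
    have hbs : 0 ≤ b * s := by positivity
    linarith [Real.quadratic_le_exp_of_nonneg hbs]
  have hsquare : c ^ 2 / (2 * a * b ^ 2) - c * s + a * ((b * s) ^ 2 / 2)
      = (a * b ^ 2 * s - c) ^ 2 / (2 * a * b ^ 2) := by
    field_simp
    ring
  have hnonneg : 0 ≤ (a * b ^ 2 * s - c) ^ 2 / (2 * a * b ^ 2) := by positivity
  linarith [mul_le_mul_of_nonneg_left hexp ha.le]

lemma superexpDecayOn_of_norm_le_exp_neg_exp {φ : ℂ → F} {S : Set ℂ} {a b C : ℝ} (ha : 0 < a)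
    (hb : 0 < b) (hφ : ∀ z ∈ S, ‖φ z‖ ≤ C * Real.exp (-a * Real.exp (b * |z.re|))) :
    SuperexpDecayOn φ S := by
  refine fun c ↦ ⟨C * Real.exp (c ^ 2 / (2 * a * b ^ 2)), fun z hz ↦ (hφ z hz).trans ?_⟩
  have hC : 0 ≤ C := nonneg_of_mul_nonneg_left ((norm_nonneg _).trans (hφ z hz)) (Real.exp_pos _)
  rw [mul_assoc, ← Real.exp_add, neg_mul c, ← sub_eq_add_neg]
  gcongr
  exact neg_mul_exp_mul_le ha hb (abs_nonneg _) c

lemma exp_neg_mul_abs_le_of_abs_sub_le {s t ε : ℝ} (hst : |s - t| ≤ ε) (c : ℝ) :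
    Real.exp (-c * |s|) ≤ Real.exp (|c| * ε) * Real.exp (-c * |t|) := by
  have hexponent : c * (|t| - |s|) ≤ |c| * ε := calc
    c * (|t| - |s|) ≤ |c| * |(|t| - |s|)| := by
      rw [← abs_mul]
      exact le_abs_self _
    _ ≤ |c| * |s - t| := by
      rw [abs_sub_comm s t]
      exact mul_le_mul_of_nonneg_left (abs_abs_sub_abs_le t s) (abs_nonneg c)
    _ ≤ |c| * ε := by gcongr
  rw [← Real.exp_add]
  gcongr
  linarith

variable [NormedSpace ℂ F]

protected lemma SuperexpDecayOn.iteratedDeriv [CompleteSpace F] {φ : ℂ → F} {S T : Set ℂ} {ε : ℝ}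
    (hdecay : SuperexpDecayOn φ S) (hφ : DifferentiableOn ℂ φ S) (hε : 0 < ε)
    (hTS : ∀ z ∈ T, Metric.closedBall z ε ⊆ S) (m : ℕ) :
    SuperexpDecayOn (iteratedDeriv m φ) T := by
  intro c
  obtain ⟨K, hK⟩ := hdecay c
  refine ⟨m.factorial * (K * Real.exp (|c| * ε)) / ε ^ m, fun z hz ↦ ?_⟩
  have hK0 : 0 ≤ K := nonneg_of_mul_nonneg_left
    ((norm_nonneg _).trans (hK z (hTS z hz (Metric.mem_closedBall_self hε.le)))) (Real.exp_pos _)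
  have hsphere : ∀ w ∈ Metric.sphere z ε,
      ‖φ w‖ ≤ K * Real.exp (|c| * ε) * Real.exp (-c * |z.re|) := by
    intro w hw
    have hre : |w.re - z.re| ≤ ε := calc
      |w.re - z.re| = |(w - z).re| := by rw [Complex.sub_re]
      _ ≤ ‖w - z‖ := abs_re_le_norm _
      _ = ε := mem_sphere_iff_norm.1 hw
    calc ‖φ w‖ ≤ K * Real.exp (-c * |w.re|) := hK w (hTS z hz (Metric.sphere_subset_closedBall hw))
      _ ≤ K * (Real.exp (|c| * ε) * Real.exp (-c * |z.re|)) := by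
        gcongr
        exact exp_neg_mul_abs_le_of_abs_sub_le hre c
      _ = K * Real.exp (|c| * ε) * Real.exp (-c * |z.re|) := (mul_assoc _ _ _).symm
  calc ‖iteratedDeriv m φ z‖
      ≤ m.factorial * (K * Real.exp (|c| * ε) * Real.exp (-c * |z.re|)) / ε ^ m :=
        norm_iteratedDeriv_le_of_forall_mem_sphere_norm_le m hε
          (hφ.diffContOnCl_ball (hTS z hz)) hsphere
    _ = m.factorial * (K * Real.exp (|c| * ε)) / ε ^ m * Real.exp (-c * |z.re|) := by ring

lemma hasDerivAt_iteratedDeriv_ofReal [CompleteSpace F] {φ : ℂ → F} {t : ℝ}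
    (hφ : AnalyticAt ℂ φ t) (m : ℕ) :
    HasDerivAt (fun s : ℝ ↦ iteratedDeriv m φ s) (iteratedDeriv (m + 1) φ t) t := by
  have hcomplex : HasDerivAt (iteratedDeriv m φ) (iteratedDeriv (m + 1) φ t) t := by
    rw [iteratedDeriv_succ, iteratedDeriv_eq_iterate]
    exact (hφ.iterated_deriv m).differentiableAt.hasDerivAt
  simpa only [ofReal_one, one_smul] using! hcomplex.scomp t (hasDerivAt_id t).ofReal_comp

lemma integrable_exp_neg_abs : Integrable fun t : ℝ ↦ Real.exp (-|t|) := by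
  refine (integrable_inv_one_add_sq.const_mul 2).mono' (by fun_prop) (.of_forall fun t ↦ ?_)
  have hexp : (1 + t ^ 2) / 2 ≤ Real.exp |t| := by
    have hquad := Real.quadratic_le_exp_of_nonneg (abs_nonneg t)
    rw [sq_abs] at hquad
    linarith [abs_nonneg t]
  calc ‖Real.exp (-|t|)‖ = (Real.exp |t|)⁻¹ := by rw [Real.norm_eq_abs, Real.abs_exp, Real.exp_neg]
    _ ≤ ((1 + t ^ 2) / 2)⁻¹ := by gcongr
    _ = 2 * (1 + t ^ 2)⁻¹ := by rw [inv_div, div_eq_mul_inv]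

/-- The kernel `e^{-ity/ℏ}` of the Fourier transform, at a complex frequency `y`. -/
noncomputable def planeWave (ℏ y : ℂ) (t : ℝ) : ℂ :=
  exp (-I * t * y / ℏ)

lemma norm_planeWave_le (ℏ y : ℂ) (t : ℝ) : ‖planeWave ℏ y t‖ ≤ Real.exp (‖y / ℏ‖ * |t|) := by
  refine (norm_exp_le_exp_norm _).trans_eq ?_
  congr 1
  rw [mul_div_assoc, norm_mul, norm_mul, norm_neg, norm_I, one_mul, norm_real, Real.norm_eq_abs,
    mul_comm]

lemma hasDerivAt_planeWave (ℏ y : ℂ) (t : ℝ) :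
    HasDerivAt (planeWave ℏ y) (-I * y / ℏ * planeWave ℏ y t) t := by
  have hexponent : HasDerivAt (fun s : ℝ ↦ -I * s * y / ℏ) (-I * y / ℏ) t := by
    simpa only [ofReal_one, mul_one] using!
      (((hasDerivAt_id t).ofReal_comp.const_mul (-I)).mul_const y).div_const ℏ
  exact hexponent.cexp.congr_deriv (mul_comm _ _)

lemma planeWave_add_I_mul {ℏ : ℂ} (hℏ : ℏ ≠ 0) (y : ℂ) (t : ℝ) :
    planeWave ℏ (y + I * ℏ) t = planeWave ℏ y t * exp t := by
  rw [planeWave, planeWave, ← Complex.exp_add]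
  congr 1
  field_simp
  linear_combination (-t * ℏ) * I_sq

lemma planeWave_sub_I_mul {ℏ : ℂ} (hℏ : ℏ ≠ 0) (y : ℂ) (t : ℝ) :
    planeWave ℏ (y - I * ℏ) t = planeWave ℏ y t * exp (-t) := by
  rw [planeWave, planeWave, ← Complex.exp_add]
  congr 1
  field_simp
  linear_combination (t * ℏ) * I_sq

lemma SuperexpDecayOn.integrable_planeWave_smul {φ : ℂ → F}
    (hdecay : SuperexpDecayOn φ (Set.range ofReal)) (hφ : Continuous fun t : ℝ ↦ φ t) (ℏ y : ℂ) :
    Integrable fun t : ℝ ↦ planeWave ℏ y t • φ t := by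
  obtain ⟨K, hK⟩ := hdecay (‖y / ℏ‖ + 1)
  have hwave : Continuous (planeWave ℏ y) :=
    continuous_iff_continuousAt.2 fun t ↦ (hasDerivAt_planeWave ℏ y t).continuousAt
  refine (integrable_exp_neg_abs.const_mul K).mono' (hwave.smul hφ).aestronglyMeasurable
    (.of_forall fun t ↦ ?_)
  calc ‖planeWave ℏ y t • φ t‖
      = ‖planeWave ℏ y t‖ * ‖φ t‖ := norm_smul _ _
    _ ≤ Real.exp (‖y / ℏ‖ * |t|) * (K * Real.exp (-(‖y / ℏ‖ + 1) * |t|)) := by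
        gcongr
        exacts [norm_planeWave_le ℏ y t, hK t ⟨t, rfl⟩]
    _ = K * Real.exp (-|t|) := by
        rw [mul_left_comm, ← Real.exp_add]
        ring_nf

/-- The unnormalised Fourier transform `∫ e^{-ity/ℏ} f(t) dt`, at a complex frequency `y`. -/
noncomputable def fourierLaplace (ℏ : ℂ) (f : ℝ → F) (y : ℂ) : F :=
  ∫ t, planeWave ℏ y t • f t

lemma smul_fourierLaplace_of_hasDerivAt {ℏ y : ℂ} {f f' : ℝ → F} (hℏ : ℏ ≠ 0)
    (hderiv : ∀ t, HasDerivAt f (f' t) t) (hf : Integrable fun t ↦ planeWave ℏ y t • f t)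
    (hf' : Integrable fun t ↦ planeWave ℏ y t • f' t) :
    (-I * ℏ) • fourierLaplace ℏ f' y = y • fourierLaplace ℏ f y := by
  have hparts : ∫ t, (planeWave ℏ y t • f' t + (-I * y / ℏ) • planeWave ℏ y t • f t) = 0 := by
    refine integral_eq_zero_of_hasDerivAt_of_integrable (fun t ↦ ?_)
      (hf'.fun_add (hf.fun_smul (-I * y / ℏ))) hf
    simpa only [mul_smul] using! (hasDerivAt_planeWave ℏ y t).smul (hderiv t)
  rw [integral_add hf' (hf.fun_smul _), integral_smul] at hparts
  have hy : -I * ℏ * (-I * y / ℏ) = -y := by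
    field_simp
    rw [I_sq, neg_one_mul]
  rw [fourierLaplace, eq_neg_of_add_eq_zero_left hparts, smul_neg, smul_smul, hy, neg_smul, neg_neg,
    fourierLaplace]

/-- `quantize ℏ φ x P` is `(P(-iℏ d/dx) φ)(x)`. It is bundled as a linear map in the symbol `P`, so
that identities about it need only be checked on monomials. -/
noncomputable def quantize (ℏ : ℂ) (φ : ℂ → F) (x : ℂ) : ℂ[X] →ₗ[ℂ] F :=
  lsum fun n ↦ LinearMap.toSpanSingleton ℂ F ((-I * ℏ) ^ n • iteratedDeriv n φ x)

lemma quantize_monomial (ℏ : ℂ) (φ : ℂ → F) (x : ℂ) (n : ℕ) (c : ℂ) :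
    quantize ℏ φ x (monomial n c) = c • (-I * ℏ) ^ n • iteratedDeriv n φ x := by
  simp [quantize, lsum_apply, sum_monomial_index]

section RealLine

variable [CompleteSpace F] {ℏ : ℂ} {φ : ℂ → F}

lemma integrable_planeWave_smul_iteratedDeriv
    (hφ : ∀ t : ℝ, AnalyticAt ℂ φ t)
    (hdecay : ∀ m, SuperexpDecayOn (iteratedDeriv m φ) (Set.range ofReal))
    (m : ℕ) (y : ℂ) :
    Integrable fun t : ℝ ↦ planeWave ℏ y t • iteratedDeriv m φ t :=
  (hdecay m).integrable_planeWave_smul (continuous_iff_continuousAt.2 fun t ↦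
    (hasDerivAt_iteratedDeriv_ofReal (hφ t) m).continuousAt) ℏ y

lemma integrable_planeWave_smul_quantize
    (hφ : ∀ t : ℝ, AnalyticAt ℂ φ t)
    (hdecay : ∀ m, SuperexpDecayOn (iteratedDeriv m φ) (Set.range ofReal))
    (P : ℂ[X]) (y : ℂ) :
    Integrable fun t : ℝ ↦ planeWave ℏ y t • quantize ℏ φ t P := by
  induction P using Polynomial.induction_on' with
  | add P Q hP hQ => simpa only [map_add, smul_add] using hP.fun_add hQ
  | monomial n c =>
    simp only [quantize_monomial, smul_comm (planeWave ℏ y _)]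
    exact ((integrable_planeWave_smul_iteratedDeriv hφ hdecay n y).fun_smul _).fun_smul c

lemma smul_fourierLaplace_iteratedDeriv
    (hφ : ∀ t : ℝ, AnalyticAt ℂ φ t)
    (hdecay : ∀ m, SuperexpDecayOn (iteratedDeriv m φ) (Set.range ofReal))
    (hℏ : ℏ ≠ 0) (m : ℕ) (y : ℂ) :
    (-I * ℏ) ^ m • fourierLaplace ℏ (fun t ↦ iteratedDeriv m φ t) y
      = y ^ m • fourierLaplace ℏ (fun t ↦ φ t) y := by
  induction m with
  | zero => simp only [pow_zero, iteratedDeriv_zero]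
  | succ m ih =>
    have hstep := smul_fourierLaplace_of_hasDerivAt hℏ
      (fun t ↦ hasDerivAt_iteratedDeriv_ofReal (hφ t) m)
      (integrable_planeWave_smul_iteratedDeriv hφ hdecay m y)
      (integrable_planeWave_smul_iteratedDeriv hφ hdecay (m + 1) y)
    rw [pow_succ, mul_smul, hstep, smul_comm, ih, pow_succ', mul_smul]

lemma fourierLaplace_quantize
    (hφ : ∀ t : ℝ, AnalyticAt ℂ φ t)
    (hdecay : ∀ m, SuperexpDecayOn (iteratedDeriv m φ) (Set.range ofReal))
    (hℏ : ℏ ≠ 0) (P : ℂ[X]) (y : ℂ) :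
    fourierLaplace ℏ (fun t ↦ quantize ℏ φ t P) y
      = P.eval y • fourierLaplace ℏ (fun t ↦ φ t) y := by
  induction P using Polynomial.induction_on' with
  | add P Q hP hQ =>
    rw [eval_add, add_smul, ← hP, ← hQ]
    simp only [fourierLaplace, map_add, smul_add]
    exact integral_add (integrable_planeWave_smul_quantize hφ hdecay P y)
      (integrable_planeWave_smul_quantize hφ hdecay Q y)
  | monomial n c =>
    rw [eval_monomial, mul_smul, ← smul_fourierLaplace_iteratedDeriv hφ hdecay hℏ]
    simp only [fourierLaplace, quantize_monomial, smul_comm (planeWave ℏ y _), integral_smul]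

end RealLine

lemma closedBall_ofReal_subset_strip (t r : ℝ) :
    Metric.closedBall (t : ℂ) r ⊆ {z : ℂ | |z.im| ≤ r} := by
  intro z hz
  calc |z.im| = |(z - t).im| := by rw [Complex.sub_im, ofReal_im, sub_zero]
    _ ≤ ‖z - t‖ := abs_im_le_norm _
    _ ≤ r := mem_closedBall_iff_norm.1 hz

theorem fourier_of_oper_solution_satisfies_baxter_general [CompleteSpace F] {ℏ Λ : ℂ} (hℏ : ℏ ≠ 0)
    {P : ℂ[X]} {r : ℝ} (hr : 0 < r) {φ : ℂ → F}
    (hφ : DifferentiableOn ℂ φ {z : ℂ | |z.im| ≤ r})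
    (hdecay : SuperexpDecayOn φ {z : ℂ | |z.im| ≤ r})
    (hoper : ∀ t : ℝ, quantize ℏ φ t P + (Λ * exp (-t) + Λ * exp t) • φ t = 0) :
    (∀ y, Integrable fun t : ℝ ↦ planeWave ℏ y t • φ t) ∧
      ∀ y, Λ • (fourierLaplace ℏ (fun t ↦ φ t) (y + I * ℏ)
            + fourierLaplace ℏ (fun t ↦ φ t) (y - I * ℏ))
          + P.eval y • fourierLaplace ℏ (fun t ↦ φ t) y = 0 := by
  have hanalytic (t : ℝ) : AnalyticAt ℂ φ t := hφ.analyticAt <|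
    Filter.mem_of_superset (Metric.closedBall_mem_nhds _ hr) (closedBall_ofReal_subset_strip t r)
  have hdecay_deriv (m : ℕ) : SuperexpDecayOn (iteratedDeriv m φ) (Set.range ofReal) :=
    hdecay.iteratedDeriv hφ hr
      (Set.forall_mem_range.2 fun t ↦ closedBall_ofReal_subset_strip t r) m
  have hint (y : ℂ) : Integrable fun t : ℝ ↦ planeWave ℏ y t • φ t := by
    simpa only [iteratedDeriv_zero] using
      integrable_planeWave_smul_iteratedDeriv hanalytic hdecay_deriv 0 y
  refine ⟨hint, fun y ↦ ?_⟩
  rw [← fourierLaplace_quantize hanalytic hdecay_deriv hℏ]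
  simp only [fourierLaplace]
  rw [← integral_add (hint _) (hint _), ← integral_smul,
    ← integral_add (((hint _).fun_add (hint _)).fun_smul Λ)
      (integrable_planeWave_smul_quantize hanalytic hdecay_deriv P y)]
  refine integral_eq_zero_of_ae (.of_forall fun t ↦ ?_)
  calc Λ • (planeWave ℏ (y + I * ℏ) t • φ t + planeWave ℏ (y - I * ℏ) t • φ t)
        + planeWave ℏ y t • quantize ℏ φ t P
      = planeWave ℏ y t • (quantize ℏ φ t P + (Λ * exp (-t) + Λ * exp t) • φ t) := by
        rw [planeWave_add_I_mul hℏ, planeWave_sub_I_mul hℏ]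
        module
    _ = 0 := by rw [hoper, smul_zero]

/-- The symbol `V_N(y) + (-1)^N u_N` of the oper: the oper equation reads
`P(-iℏ d/dx) φ + Λ^N (e^{-x} + e^x) φ = 0` with this `P`. -/
noncomputable def operSymbol (N : ℕ) (u : ℕ → ℂ) : ℂ[X] :=
  monomial N 1 + ∑ k ∈ Finset.Icc 2 (N - 2), monomial (N - k) ((-1) ^ k * u k)
    + monomial 0 ((-1) ^ N * u N)

lemma eval_operSymbol (N : ℕ) (u : ℕ → ℂ) (y : ℂ) :
    (operSymbol N u).eval y
      = y ^ N + ∑ k ∈ Finset.Icc 2 (N - 2), (-1) ^ k * u k * y ^ (N - k) + (-1) ^ N * u N := by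
  simp [operSymbol, eval_finsetSum]

lemma quantize_operSymbol (N : ℕ) (u : ℕ → ℂ) (ℏ : ℂ) (φ : ℂ → ℂ) (x : ℂ) :
    quantize ℏ φ x (operSymbol N u)
      = (-I * ℏ) ^ N * iteratedDeriv N φ x
        + (∑ k ∈ Finset.Icc 2 (N - 2),
            (-1) ^ k * u k * (-I * ℏ) ^ (N - k) * iteratedDeriv (N - k) φ x)
        + (-1) ^ N * u N * φ x := by
  simp only [operSymbol, map_add, map_sum, quantize_monomial, smul_eq_mul, one_mul, pow_zero,
    iteratedDeriv_zero, mul_assoc]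

end Baxter

/-- if φ is holomorphic on the strip |Im x| < δ (0 < δ ≤ π), solves the
oper equation there, and decays double-exponentially on |Im x| ≤ δ/2, then its Fourier
transform ψ(y) = (2πℏ)^{-1/2} ∫_ℝ e^{-ixy/ℏ} φ(x) dx converges absolutely for every
y ∈ ℂ and satisfies the Baxter-type difference equation. -/
theorem fourier_of_oper_solution_satisfies_baxter
    (N : ℕ) (hN : 2 ≤ N) (hbar Lam : ℝ) (hhbar : 0 < hbar) (hLam : 0 < Lam)
    (u : ℕ → ℂ) (δ : ℝ) (hδ0 : 0 < δ) (hδπ : δ ≤ Real.pi)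
    (φ : ℂ → ℂ)
    (hφhol : DifferentiableOn ℂ φ {x : ℂ | |x.im| < δ})
    (hoper : ∀ x : ℂ, |x.im| < δ →
      (-Complex.I * hbar) ^ N * iteratedDeriv N φ x
        + (∑ k ∈ Finset.Icc 2 (N - 2),
            (-1 : ℂ) ^ k * u k * (-Complex.I * hbar) ^ (N - k) * iteratedDeriv (N - k) φ x)
        + ((Lam : ℂ) ^ N * Complex.exp (-x) + (Lam : ℂ) ^ N * Complex.exp x
            + (-1 : ℂ) ^ N * u N) * φ x = 0)
    (a b C : ℝ) (ha : 0 < a) (hb : 0 < b) (hC : 0 < C)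
    (hbound : ∀ x : ℂ, |x.im| ≤ δ / 2 →
      ‖φ x‖ ≤ C * Real.exp (-a * Real.exp (b * |x.re|)))
    (ψ : ℂ → ℂ)
    (hψ : ∀ y : ℂ, ψ y = (Real.sqrt (2 * Real.pi * hbar))⁻¹ *
        ∫ t : ℝ, Complex.exp (-Complex.I * t * y / hbar) * φ t) :
    (∀ y : ℂ, Integrable (fun t : ℝ => Complex.exp (-Complex.I * t * y / hbar) * φ t))
    ∧ ∀ y : ℂ,
      (Lam : ℂ) ^ N * (ψ (y + Complex.I * hbar) + ψ (y - Complex.I * hbar))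
        + (y ^ N + ∑ k ∈ Finset.Icc 2 (N - 2), (-1 : ℂ) ^ k * u k * y ^ (N - k)) * ψ y
        = (-1 : ℂ) ^ (N + 1) * u N * ψ y := by
  have hℏ : (hbar : ℂ) ≠ 0 := Complex.ofReal_ne_zero.2 hhbar.ne'
  have hstrip : {z : ℂ | |z.im| ≤ δ / 2} ⊆ {z : ℂ | |z.im| < δ} :=
    fun z hz ↦ lt_of_le_of_lt hz (half_lt_self hδ0)
  obtain ⟨hint, hbaxter⟩ := fourier_of_oper_solution_satisfies_baxter_general
    (Λ := (Lam : ℂ) ^ N) (P := operSymbol N u) hℏ (half_pos hδ0) (hφhol.mono hstrip)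
    (superexpDecayOn_of_norm_le_exp_neg_exp ha hb hbound) fun t ↦ by
      rw [quantize_operSymbol, smul_eq_mul]
      linear_combination hoper t (by simpa using hδ0)
  simp only [smul_eq_mul, eval_operSymbol, fourierLaplace, planeWave] at hint hbaxter
  refine ⟨hint, fun y ↦ ?_⟩
  rw [hψ, hψ, hψ]
  linear_combination ((Real.sqrt (2 * Real.pi * hbar))⁻¹ : ℝ) * hbaxter y
end
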